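/- arXiv:1012.5261 — 4 statements merged into one kernel-verified Lean document; each statement's English description precedes it below -/
import Mathlib

section
/- In R one has [W₋₁, W₁] = [W₀, W₂], i.e. [W₋₁, A*] = [A, W₂]. (Image of the O_q(ŝl₂) relation [W₋₁, W₁] = [W₀, W₂], the k = 1 case of relation (qo1)/(qo5).) -/
/-- Commutator [X,Y] = XY - YX. -/
def lieComm {R : Type*} [Ring R] (X Y : R) : R := X * Y - Y * X

/-- q-commutator [X,Y]_q = q XY - q⁻¹ YX. -/
noncomputable def qcomm {R : Type*} [Ring R] [Algebra ℂ R] (q : ℂ) (X Y : R) : R :=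
  q • (X * Y) - q⁻¹ • (Y * X)

/-!
By bilinearity the identity reduces to its cubic part. There `⁅X * Y * X, Y⁆ = ⁅X, Y * X * Y⁆`,
since both are `X * Y * X * Y - Y * X * Y * X`. The remaining cubic terms are anticommutators, and
`⁅X ^ 2 * Y + Y * X ^ 2, Y⁆ = ⁅X ^ 2, Y ^ 2⁆ = ⁅X, Y ^ 2 * X + X * Y ^ 2⁆`. The linear terms
contribute the same multiple of `⁅X, Y⁆` to both sides.
-/

theorem lieComm_eq_lie {R : Type*} [Ring R] (X Y : R) : lieComm X Y = ⁅X, Y⁆ := rfl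

section Brackets

variable {R : Type*} [NonUnitalRing R]

theorem lie_mul_mul_self (X Y : R) : ⁅X * Y * X, Y⁆ = ⁅X, Y * X * Y⁆ := by
  simp only [Ring.lie_def, mul_assoc]

theorem lie_mul_add_mul_left (X Y : R) : ⁅X * Y + Y * X, Y⁆ = ⁅X, Y * Y⁆ := by
  simp only [Ring.lie_def, add_mul, mul_add, mul_assoc]
  abel

theorem lie_mul_add_mul_right (X Y : R) : ⁅X, Y * X + X * Y⁆ = ⁅X * X, Y⁆ := by
  simp only [Ring.lie_def, add_mul, mul_add, mul_assoc]
  abel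

end Brackets

section DolanGrady

attribute [local instance] LieRing.ofAssociativeRing

variable {k R : Type*} [CommRing k] [Ring R] [Algebra k R]

/-- The cubic expression `c XYX - X²Y - YX²` in the alternating generators. For `c = q² + q⁻²` it is
`-[X,[X,Y]_q]_{q⁻¹}`, so the `q`-Dolan–Grady relation says that its bracket with `X` is a multiple
of `[X,Y]`. The coefficient `c` is left arbitrary. -/
def dolanGradyCubic (c : k) (X Y : R) : R := c • (X * Y * X) - X ^ 2 * Y - Y * X ^ 2

theorem lie_dolanGradyCubic (c : k) (X Y : R) :
    ⁅dolanGradyCubic c X Y, Y⁆ = ⁅X, dolanGradyCubic c Y X⁆ := by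
  calc ⁅dolanGradyCubic c X Y, Y⁆
      = c • ⁅X * Y * X, Y⁆ - ⁅X ^ 2 * Y + Y * X ^ 2, Y⁆ := by
        rw [dolanGradyCubic, sub_sub, sub_lie, smul_lie]
    _ = c • ⁅X, Y * X * Y⁆ - ⁅X ^ 2, Y ^ 2⁆ := by
        rw [lie_mul_mul_self, lie_mul_add_mul_left, ← sq]
    _ = c • ⁅X, Y * X * Y⁆ - ⁅X, Y ^ 2 * X + X * Y ^ 2⁆ := by
        rw [lie_mul_add_mul_right, ← sq]
    _ = ⁅X, dolanGradyCubic c Y X⁆ := by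
        rw [dolanGradyCubic, sub_sub, lie_sub, LieAlgebra.lie_smul]

theorem stmt_2_general (r c s : k) (X Y : R) :
    ⁅r • dolanGradyCubic c X Y + Y + s • X, Y⁆ = ⁅X, r • dolanGradyCubic c Y X + X + s • Y⁆ := by
  simp only [add_lie, lie_add, smul_lie, LieAlgebra.lie_smul, lie_self, lie_dolanGradyCubic]

end DolanGrady

theorem stmt_2
    {R : Type*} [Ring R] [Algebra ℂ R]
    (q ρ a₁ : ℂ) (hq : q ≠ 0) (hq8 : q ^ 8 ≠ 1) (hρ : ρ ≠ 0)
    (A As : R)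
    (hDG1 : lieComm A (qcomm q⁻¹ A (qcomm q A As)) = ρ • lieComm A As)
    (hDG2 : lieComm As (qcomm q⁻¹ As (qcomm q As A)) = ρ • lieComm As A)
    (G1 Gt1 Wm1 W2 : R)
    (hG1 : G1 = qcomm q As A + a₁ • (1 : R))
    (hGt1 : Gt1 = qcomm q A As + a₁ • (1 : R))
    (hWm1 : Wm1 = ρ⁻¹ • ((q ^ 2 + q⁻¹ ^ 2) • (A * As * A) - A ^ 2 * As - As * A ^ 2)
        + As + (ρ⁻¹ * a₁ * (q - q⁻¹)) • A)
    (hW2 : W2 = ρ⁻¹ • ((q ^ 2 + q⁻¹ ^ 2) • (As * A * As) - As ^ 2 * A - A * As ^ 2)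
        + A + (ρ⁻¹ * a₁ * (q - q⁻¹)) • As)
    : lieComm Wm1 As = lieComm A W2 := by
  rw [hWm1, hW2, lieComm_eq_lie, lieComm_eq_lie]
  exact stmt_2_general _ _ _ A As
end

section
/- In R one has (q+q⁻¹)[W₀, W₂] = G̃₂ − G₂, i.e. (q+q⁻¹)(A·W₂ − W₂·A) = G̃₂ − G₂. (Image of the O_q(ŝl₂) relation [W₀, W₂] = (G̃₂ − G₂)/(q+q⁻¹), the k = 1 case of relation (qo1), verifying the explicit formula for G₂ of Example 2.) -/
/-!
In `G̃₂ - G₂` every term symmetric in the generators `A`, `A*` cancels. The quartic terms leave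
`(q + q⁻¹)(q² + q⁻²)` times `(q² + q⁻²)(A A* A A* - A* A A* A) - [A², A*²]`, and the
`q`-commutators leave a multiple of `[A, A*]`. The same two expressions make up `[A, W₂]`: the
contributions of `A A*² A` to the commutator of `A` with the cubic part of `W₂` cancel.
-/

section AlternatingElements

variable {K R : Type*} [Field K] [Ring R] [Algebra K R]

/-- The `q`-commutator `[X, Y]_q = q XY - q⁻¹ YX` over an arbitrary field of scalars. -/
def qCommutator (q : K) (X Y : R) : R :=
  q • (X * Y) - q⁻¹ • (Y * X)

/-- The alternating element `W₂` of the `q`-Onsager algebra as an expression in the generators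
`X = W₀` and `Y = W₁`; the expression with `X` and `Y` interchanged is `W₋₁`. -/
def alternatingW₂ (q ρ a₁ : K) (X Y : R) : R :=
  ρ⁻¹ • ((q ^ 2 + q⁻¹ ^ 2) • (Y * X * Y) - Y ^ 2 * X - X * Y ^ 2)
    + X + (ρ⁻¹ * a₁ * (q - q⁻¹)) • Y

/-- The homogeneous part of degree four of `ρ (q² + q⁻²) G₂` in the generators `X = W₀` and
`Y = W₁`. -/
def alternatingG₂Quartic (q : K) (X Y : R) : R :=
  (q⁻¹ ^ 3 + q⁻¹) • (X ^ 2 * Y ^ 2) - (q ^ 3 + q) • (Y ^ 2 * X ^ 2)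
    + (q⁻¹ ^ 3 - q ^ 3) • (X * Y ^ 2 * X + Y * X ^ 2 * Y)
    - (q⁻¹ ^ 5 + q⁻¹ ^ 3 + 2 * q⁻¹) • (X * Y * X * Y)
    + (q ^ 5 + q ^ 3 + 2 * q) • (Y * X * Y * X)

/-- The alternating element `G₂` of the `q`-Onsager algebra as an expression in the generators
`X = W₀` and `Y = W₁`; the expression with `X` and `Y` interchanged is `G̃₂`. -/
def alternatingG₂ (q ρ a₁ a₂ : K) (X Y : R) : R :=
  (ρ * (q ^ 2 + q⁻¹ ^ 2))⁻¹ •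
    (alternatingG₂Quartic q X Y + (ρ * (q - q⁻¹)) • (X ^ 2 + Y ^ 2)
      + (a₁ * (q ^ 2 + q⁻¹ ^ 2) * (q - q⁻¹)) • qCommutator q Y X) + a₂ • (1 : R)

theorem sq_add_inv_sq_ne_zero {q : K} (hq : q ≠ 0) (hq8 : q ^ 8 ≠ 1) :
    q ^ 2 + q⁻¹ ^ 2 ≠ 0 := by
  intro h
  have hq4 : q ^ 4 = -1 := by
    field_simp at h
    linear_combination h
  exact hq8 (by linear_combination (q ^ 4 - 1) * hq4)

theorem qCommutator_sub_qCommutator_swap (q : K) (X Y : R) :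
    qCommutator q X Y - qCommutator q Y X = (q + q⁻¹) • ⁅X, Y⁆ := by
  simp only [qCommutator, Ring.lie_def]
  module

theorem lie_smul_mul_mul_sub_sq_mul_sub_mul_sq {k S : Type*} [CommRing k] [Ring S] [Algebra k S]
    (c : k) (X Y : S) :
    ⁅X, c • (Y * X * Y) - Y ^ 2 * X - X * Y ^ 2⁆ =
      c • (X * Y * X * Y - Y * X * Y * X) - ⁅X ^ 2, Y ^ 2⁆ := by
  simp only [Ring.lie_def, mul_sub, sub_mul, mul_smul_comm, smul_mul_assoc, smul_sub, sq, mul_assoc]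
  abel

theorem alternatingG₂Quartic_swap_sub {q : K} (hq : q ≠ 0) (X Y : R) :
    alternatingG₂Quartic q Y X - alternatingG₂Quartic q X Y =
      ((q + q⁻¹) * (q ^ 2 + q⁻¹ ^ 2)) •
        ((q ^ 2 + q⁻¹ ^ 2) • (X * Y * X * Y - Y * X * Y * X) - ⁅X ^ 2, Y ^ 2⁆) := by
  simp only [alternatingG₂Quartic, Ring.lie_def]
  match_scalars <;> field_simp <;> ring

theorem alternatingG₂_swap_sub (q ρ a₁ a₂ : K) (X Y : R) :
    alternatingG₂ q ρ a₁ a₂ Y X - alternatingG₂ q ρ a₁ a₂ X Y =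
      (ρ * (q ^ 2 + q⁻¹ ^ 2))⁻¹ •
        (alternatingG₂Quartic q Y X - alternatingG₂Quartic q X Y
          + (a₁ * (q ^ 2 + q⁻¹ ^ 2) * (q - q⁻¹) * (q + q⁻¹)) • ⁅X, Y⁆) := by
  rw [mul_smul _ (q + q⁻¹), ← qCommutator_sub_qCommutator_swap]
  simp only [alternatingG₂]
  module

theorem lie_alternatingW₂ (q ρ a₁ : K) (X Y : R) :
    ⁅X, alternatingW₂ q ρ a₁ X Y⁆ =
      ρ⁻¹ • ((q ^ 2 + q⁻¹ ^ 2) • (X * Y * X * Y - Y * X * Y * X) - ⁅X ^ 2, Y ^ 2⁆)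
        + (ρ⁻¹ * a₁ * (q - q⁻¹)) • ⁅X, Y⁆ := by
  rw [← lie_smul_mul_mul_sub_sq_mul_sub_mul_sq]
  simp only [alternatingW₂, Ring.lie_def, mul_add, add_mul, mul_smul_comm, smul_mul_assoc]
  module

theorem stmt_4_general {q ρ : K} (hρ : ρ ≠ 0) (hc : q ^ 2 + q⁻¹ ^ 2 ≠ 0) (a₁ a₂ : K) (X Y : R) :
    (q + q⁻¹) • ⁅X, alternatingW₂ q ρ a₁ X Y⁆ =
      alternatingG₂ q ρ a₁ a₂ Y X - alternatingG₂ q ρ a₁ a₂ X Y := by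
  have hq : q ≠ 0 := by
    rintro rfl
    simp at hc
  rw [lie_alternatingW₂, alternatingG₂_swap_sub, alternatingG₂Quartic_swap_sub hq]
  generalize q ^ 2 + q⁻¹ ^ 2 = c at hc ⊢
  match_scalars <;> field_simp

end AlternatingElements

theorem stmt_4
    {R : Type*} [Ring R] [Algebra ℂ R]
    (q ρ a₁ : ℂ) (hq : q ≠ 0) (hq8 : q ^ 8 ≠ 1) (hρ : ρ ≠ 0)
    (A As : R)
    (hDG1 : lieComm A (qcomm q⁻¹ A (qcomm q A As)) = ρ • lieComm A As)
    (hDG2 : lieComm As (qcomm q⁻¹ As (qcomm q As A)) = ρ • lieComm As A)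
    (G1 Gt1 Wm1 W2 : R)
    (hG1 : G1 = qcomm q As A + a₁ • (1 : R))
    (hGt1 : Gt1 = qcomm q A As + a₁ • (1 : R))
    (hWm1 : Wm1 = ρ⁻¹ • ((q ^ 2 + q⁻¹ ^ 2) • (A * As * A) - A ^ 2 * As - As * A ^ 2)
        + As + (ρ⁻¹ * a₁ * (q - q⁻¹)) • A)
    (hW2 : W2 = ρ⁻¹ • ((q ^ 2 + q⁻¹ ^ 2) • (As * A * As) - As ^ 2 * A - A * As ^ 2)
        + A + (ρ⁻¹ * a₁ * (q - q⁻¹)) • As)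
    (a₂ : ℂ) (G2 Gt2 : R)
    (hG2 : G2 = (ρ * (q ^ 2 + q⁻¹ ^ 2))⁻¹ •
        ((q⁻¹ ^ 3 + q⁻¹) • (A ^ 2 * As ^ 2) - (q ^ 3 + q) • (As ^ 2 * A ^ 2)
          + (q⁻¹ ^ 3 - q ^ 3) • (A * As ^ 2 * A + As * A ^ 2 * As)
          - (q⁻¹ ^ 5 + q⁻¹ ^ 3 + 2 * q⁻¹) • (A * As * A * As)
          + (q ^ 5 + q ^ 3 + 2 * q) • (As * A * As * A)
          + (ρ * (q - q⁻¹)) • (A ^ 2 + As ^ 2)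
          + (a₁ * (q ^ 2 + q⁻¹ ^ 2) * (q - q⁻¹)) • qcomm q As A) + a₂ • (1 : R))
    (hGt2 : Gt2 = (ρ * (q ^ 2 + q⁻¹ ^ 2))⁻¹ •
        ((q⁻¹ ^ 3 + q⁻¹) • (As ^ 2 * A ^ 2) - (q ^ 3 + q) • (A ^ 2 * As ^ 2)
          + (q⁻¹ ^ 3 - q ^ 3) • (As * A ^ 2 * As + A * As ^ 2 * A)
          - (q⁻¹ ^ 5 + q⁻¹ ^ 3 + 2 * q⁻¹) • (As * A * As * A)
          + (q ^ 5 + q ^ 3 + 2 * q) • (A * As * A * As)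
          + (ρ * (q - q⁻¹)) • (As ^ 2 + A ^ 2)
          + (a₁ * (q ^ 2 + q⁻¹ ^ 2) * (q - q⁻¹)) • qcomm q A As) + a₂ • (1 : R))
    : (q + q⁻¹) • (A * W2 - W2 * A) = Gt2 - G2 := by
  subst hW2 hG2 hGt2
  exact stmt_4_general hρ (sq_add_inv_sq_ne_zero hq hq8) a₁ a₂ A As
end

section
/- In R one has [G₂, W₁]_q = [W₁, G̃₂]_q, i.e. [G₂, A*]_q = [A*, G̃₂]_q. (Image of the k = 1 case of the O_q(ŝl₂) relation (qo3), whose common value is ρW₃ − ρW₋₁.) -/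
/-! Since `[[X, M]_q, X]_q = [X, [M, X]_q]_q` holds identically, any `G = [A*, M]_q + Z` and
`G̃ = [M, A*]_q + Z` with `Z` commuting with `A*` satisfy `[G, A*]_q = [A*, G̃]_q`. Both `G₂` and
`G̃₂` have this shape, with `M` a combination of `A` and `[A, [A, A*]_q]_{q⁻¹}`. The q-Dolan–Grady
relation enters only through `[Z, A*] = 0`: anticommuting it with `A` turns both of its sides into
commutators with `A*`, giving `[A*, S] = ρ[A*, A²]` for an explicit quartic element `S`. -/

theorem lie_mul {R : Type*} [NonUnitalRing R] (X Y Z : R) :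
    ⁅X, Y * Z⁆ = ⁅X, Y⁆ * Z + Y * ⁅X, Z⁆ := by
  simp only [Ring.lie_def, mul_sub, sub_mul, mul_assoc, sub_add_sub_cancel]

section QBracket

variable {K R : Type*} [CommRing K] [Ring R] [Algebra K R]

/-- The q-commutator `[X, Y]_q = q XY - q⁻¹ YX` over a commutative ring of scalars, as a bilinear
map. The unit `q` has a genuine inverse, unlike the `q` of `qcomm`. -/
def qBracket (q : Kˣ) : R →ₗ[K] R →ₗ[K] R :=
  (q : K) • LinearMap.mul K R - (↑q⁻¹ : K) • (LinearMap.mul K R).flip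

theorem qBracket_apply (q : Kˣ) (X Y : R) :
    qBracket q X Y = (q : K) • (X * Y) - (↑q⁻¹ : K) • (Y * X) :=
  rfl

theorem qcomm_eq_qBracket {R : Type*} [Ring R] [Algebra ℂ R] (q : ℂˣ) (X Y : R) :
    qcomm (q : ℂ) X Y = qBracket q X Y := by
  rw [qcomm, qBracket_apply, Units.val_inv_eq_inv_val]

theorem qBracket_flexible (q : Kˣ) (X Y : R) :
    qBracket q (qBracket q X Y) X = qBracket q X (qBracket q Y X) := by
  simp only [qBracket_apply, mul_sub, sub_mul, mul_smul_comm, smul_mul_assoc, mul_assoc]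
  module

theorem qBracket_comm_of_commute (q : Kˣ) {X Y : R} (h : Commute X Y) :
    qBracket q X Y = qBracket q Y X := by
  rw [qBracket_apply, qBracket_apply, h.eq]

theorem qBracket_qBracket_add_of_commute (q : Kˣ) {X Z : R} (M : R) (hZ : Commute Z X) :
    qBracket q (qBracket q X M + Z) X = qBracket q X (qBracket q M X + Z) := by
  rw [map_add, map_add, LinearMap.add_apply, qBracket_flexible, qBracket_comm_of_commute q hZ]

theorem qBracket_inv_qBracket (q : Kˣ) (X Y : R) :
    qBracket q⁻¹ X (qBracket q X Y)
      = ⁅X, ⁅X, Y⁆⁆ - ((q : K) - (↑q⁻¹ : K)) ^ 2 • (X * Y * X) := by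
  have hq : (q : K) * (↑q⁻¹ : K) = 1 := q.mul_inv
  simp only [qBracket_apply, Ring.lie_def, inv_inv, mul_sub, sub_mul, mul_smul_comm,
    smul_mul_assoc, ← mul_assoc]
  match_scalars <;> grind

end QBracket

section Quartic

attribute [local instance] LieRing.ofAssociativeRing

variable {K R : Type*} [CommRing K] [Ring R] [Algebra K R]

/-- The quartic element `S` of the q-Onsager algebra for which `S - ρA²` commutes with `B`. It is
found by writing `A[B, E] + [B, E]A`, with `E = [B, [B, A]_q]_{q⁻¹}`, as a commutator `[B, S]`. -/
def onsagerQuartic (q : Kˣ) (A B : R) : R :=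
  A * qBracket q⁻¹ B (qBracket q B A) + qBracket q⁻¹ B (qBracket q B A) * A - ⁅B, A⁆ ^ 2
    + ((q : K) - (↑q⁻¹ : K)) ^ 2 • (A * B ^ 2 * A)

theorem onsagerQuartic_eq (q : Kˣ) (A B : R) :
    onsagerQuartic q A B
      = A ^ 2 * B ^ 2 + B ^ 2 * A ^ 2 + B * A ^ 2 * B
        + ((q : K) ^ 2 + 1 + (↑q⁻¹ : K) ^ 2) • (A * B ^ 2 * A - A * B * A * B - B * A * B * A) := by
  have hq : (q : K) * (↑q⁻¹ : K) = 1 := q.mul_inv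
  simp only [onsagerQuartic, qBracket_inv_qBracket, Ring.lie_def, sq A, sq B, sq (B * A - A * B),
    mul_sub, sub_mul, mul_smul_comm, smul_mul_assoc, ← mul_assoc]
  match_scalars <;> grind

theorem lie_onsagerQuartic (q : Kˣ) (A B : R) :
    ⁅B, onsagerQuartic q A B⁆
      = A * ⁅B, qBracket q⁻¹ B (qBracket q B A)⁆ + ⁅B, qBracket q⁻¹ B (qBracket q B A)⁆ * A := by
  set E := qBracket q⁻¹ B (qBracket q B A) with hE
  set t := ((q : K) - (↑q⁻¹ : K)) ^ 2
  have leibniz : ⁅B, A * E + E * A⁆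
      = (A * ⁅B, E⁆ + ⁅B, E⁆ * A) + (⁅B, A⁆ * E + E * ⁅B, A⁆) := by
    rw [lie_add, lie_mul, lie_mul]
    abel
  have sandwich : ⁅B, A * B ^ 2 * A⁆ = ⁅B, A⁆ * (B * A * B) + (B * A * B) * ⁅B, A⁆ := by
    simp only [Ring.lie_def]
    noncomm_ring
  have anticommutator_lie :
      ⁅B, A⁆ * E + E * ⁅B, A⁆ = ⁅B, ⁅B, A⁆ ^ 2⁆ - t • ⁅B, A * B ^ 2 * A⁆ := by
    rw [sq ⁅B, A⁆, lie_mul, sandwich, hE, qBracket_inv_qBracket, mul_sub, sub_mul, mul_smul_comm,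
      smul_mul_assoc]
    module
  rw [onsagerQuartic, lie_add, lie_sub, LieAlgebra.lie_smul, leibniz, anticommutator_lie]
  abel

theorem commute_onsagerQuartic_sub (q : Kˣ) {ρ : K} {A B : R}
    (hDG : ⁅B, qBracket q⁻¹ B (qBracket q B A)⁆ = ρ • ⁅B, A⁆) :
    Commute (onsagerQuartic q A B - ρ • A ^ 2) B := by
  rw [Commute.symm_iff, commute_iff_lie_eq, lie_sub, LieAlgebra.lie_smul, lie_onsagerQuartic,
    hDG, sq, lie_mul, mul_smul_comm, smul_mul_assoc, ← smul_add, add_comm, sub_self]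

/-- The homogeneous quartic part of `ρ(q² + q⁻²)G₂`, with `A = W₀` and `B = W₁`; the one of
`ρ(q² + q⁻²)G̃₂` is obtained by interchanging `A` and `B`. -/
def quarticPart (q : Kˣ) (A B : R) : R :=
  ((↑q⁻¹ : K) ^ 3 + (↑q⁻¹ : K)) • (A ^ 2 * B ^ 2) - ((q : K) ^ 3 + q) • (B ^ 2 * A ^ 2)
    + ((↑q⁻¹ : K) ^ 3 - (q : K) ^ 3) • (A * B ^ 2 * A + B * A ^ 2 * B)
    - ((↑q⁻¹ : K) ^ 5 + (↑q⁻¹ : K) ^ 3 + 2 * (↑q⁻¹ : K)) • (A * B * A * B)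
    + ((q : K) ^ 5 + (q : K) ^ 3 + 2 * q) • (B * A * B * A)

theorem quarticPart_eq (q : Kˣ) (A B : R) :
    quarticPart q A B
      = -((q : K) ^ 2 + (↑q⁻¹ : K) ^ 2) • qBracket q B (qBracket q⁻¹ A (qBracket q A B))
        - ((q : K) - (↑q⁻¹ : K)) • onsagerQuartic q A B := by
  have hq : (q : K) * (↑q⁻¹ : K) = 1 := q.mul_inv
  rw [quarticPart, onsagerQuartic_eq, qBracket_inv_qBracket]
  simp only [qBracket_apply, Ring.lie_def, sq A, sq B, mul_sub, sub_mul, mul_smul_comm,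
    smul_mul_assoc, ← mul_assoc]
  match_scalars <;> grind

theorem quarticPart_swap_eq (q : Kˣ) (A B : R) :
    quarticPart q B A
      = -((q : K) ^ 2 + (↑q⁻¹ : K) ^ 2) • qBracket q (qBracket q⁻¹ A (qBracket q A B)) B
        - ((q : K) - (↑q⁻¹ : K)) • onsagerQuartic q A B := by
  have hq : (q : K) * (↑q⁻¹ : K) = 1 := q.mul_inv
  rw [quarticPart, onsagerQuartic_eq, qBracket_inv_qBracket]
  simp only [qBracket_apply, Ring.lie_def, sq A, sq B, mul_sub, sub_mul, mul_smul_comm,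
    smul_mul_assoc, ← mul_assoc]
  match_scalars <;> grind

end Quartic

/-- The elements `G₂` and `G̃₂` of `stmt_6` correspond to `c = (ρ(q² + q⁻²))⁻¹` and
`κ = a₁(q² + q⁻²)(q - q⁻¹)`; with `c` and `κ` free, no scalar other than `q` is inverted. -/
theorem stmt_6_general {K R : Type*} [CommRing K] [Ring R] [Algebra K R] (q : Kˣ) (ρ c κ a : K)
    (A B : R) (hDG : ⁅B, qBracket q⁻¹ B (qBracket q B A)⁆ = ρ • ⁅B, A⁆) :
    qBracket q (c • (quarticPart q A B + (ρ * (q - ↑q⁻¹)) • (A ^ 2 + B ^ 2)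
        + κ • qBracket q B A) + a • (1 : R)) B
      = qBracket q B (c • (quarticPart q B A + (ρ * (q - ↑q⁻¹)) • (B ^ 2 + A ^ 2)
        + κ • qBracket q A B) + a • (1 : R)) := by
  set M : R := c • (κ • A
    - ((q : K) ^ 2 + (↑q⁻¹ : K) ^ 2) • qBracket q⁻¹ A (qBracket q A B))
  set Z : R := a • (1 : R)
    - (c * (q - ↑q⁻¹)) • (onsagerQuartic q A B - ρ • A ^ 2 - ρ • B ^ 2)
  have hZB : Commute Z B :=
    ((Commute.one_left B).smul_left a).sub_left
      (((commute_onsagerQuartic_sub q hDG).sub_left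
        (((Commute.refl B).pow_left 2).smul_left ρ)).smul_left _)
  have hG : c • (quarticPart q A B + (ρ * (q - ↑q⁻¹)) • (A ^ 2 + B ^ 2) + κ • qBracket q B A)
      + a • (1 : R) = qBracket q B M + Z := by
    rw [quarticPart_eq, map_smul, map_sub, map_smul, map_smul]
    module
  have hGt : c • (quarticPart q B A + (ρ * (q - ↑q⁻¹)) • (B ^ 2 + A ^ 2) + κ • qBracket q A B)
      + a • (1 : R) = qBracket q M B + Z := by
    rw [quarticPart_swap_eq]
    simp only [M, map_smul, map_sub, LinearMap.smul_apply, LinearMap.sub_apply]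
    module
  rw [hG, hGt, qBracket_qBracket_add_of_commute q M hZB]

theorem stmt_6
    {R : Type*} [Ring R] [Algebra ℂ R]
    (q ρ a₁ : ℂ) (hq : q ≠ 0) (hq8 : q ^ 8 ≠ 1) (hρ : ρ ≠ 0)
    (A As : R)
    (hDG1 : lieComm A (qcomm q⁻¹ A (qcomm q A As)) = ρ • lieComm A As)
    (hDG2 : lieComm As (qcomm q⁻¹ As (qcomm q As A)) = ρ • lieComm As A)
    (G1 Gt1 Wm1 W2 : R)
    (hG1 : G1 = qcomm q As A + a₁ • (1 : R))
    (hGt1 : Gt1 = qcomm q A As + a₁ • (1 : R))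
    (hWm1 : Wm1 = ρ⁻¹ • ((q ^ 2 + q⁻¹ ^ 2) • (A * As * A) - A ^ 2 * As - As * A ^ 2)
        + As + (ρ⁻¹ * a₁ * (q - q⁻¹)) • A)
    (hW2 : W2 = ρ⁻¹ • ((q ^ 2 + q⁻¹ ^ 2) • (As * A * As) - As ^ 2 * A - A * As ^ 2)
        + A + (ρ⁻¹ * a₁ * (q - q⁻¹)) • As)
    (a₂ : ℂ) (G2 Gt2 : R)
    (hG2 : G2 = (ρ * (q ^ 2 + q⁻¹ ^ 2))⁻¹ •
        ((q⁻¹ ^ 3 + q⁻¹) • (A ^ 2 * As ^ 2) - (q ^ 3 + q) • (As ^ 2 * A ^ 2)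
          + (q⁻¹ ^ 3 - q ^ 3) • (A * As ^ 2 * A + As * A ^ 2 * As)
          - (q⁻¹ ^ 5 + q⁻¹ ^ 3 + 2 * q⁻¹) • (A * As * A * As)
          + (q ^ 5 + q ^ 3 + 2 * q) • (As * A * As * A)
          + (ρ * (q - q⁻¹)) • (A ^ 2 + As ^ 2)
          + (a₁ * (q ^ 2 + q⁻¹ ^ 2) * (q - q⁻¹)) • qcomm q As A) + a₂ • (1 : R))
    (hGt2 : Gt2 = (ρ * (q ^ 2 + q⁻¹ ^ 2))⁻¹ •
        ((q⁻¹ ^ 3 + q⁻¹) • (As ^ 2 * A ^ 2) - (q ^ 3 + q) • (A ^ 2 * As ^ 2)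
          + (q⁻¹ ^ 3 - q ^ 3) • (As * A ^ 2 * As + A * As ^ 2 * A)
          - (q⁻¹ ^ 5 + q⁻¹ ^ 3 + 2 * q⁻¹) • (As * A * As * A)
          + (q ^ 5 + q ^ 3 + 2 * q) • (A * As * A * As)
          + (ρ * (q - q⁻¹)) • (As ^ 2 + A ^ 2)
          + (a₁ * (q ^ 2 + q⁻¹ ^ 2) * (q - q⁻¹)) • qcomm q A As) + a₂ • (1 : R))
    : qcomm q G2 As = qcomm q As Gt2 := by
  subst hG2 hGt2
  lift q to ℂˣ using hq.isUnit
  simp only [← Units.val_inv_eq_inv_val, qcomm_eq_qBracket] at hDG2 ⊢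
  exact stmt_6_general q ρ _ _ a₂ A As hDG2
end

section
/- In R one has [W₋₂, W₀] = 0 and [W₃, W₁] = 0, i.e. W₋₂ commutes with A and W₃ commutes with A*. (Image of the O_q(ŝl₂) relations [W₋₂, W₀] = 0 and [W₃, W₁] = 0 from the commuting family (qo4).) -/
/-!
In terms of the generators, `W₋₁ = W₁ + ρ⁻¹[W₀, G₁]_q` and `W₂ = W₀ + ρ⁻¹[G₁, W₁]_q`, and the first
q-Dolan–Grady relation says exactly that `W₀` commutes with `W₋₁`. A q-analogue of the Jacobi
identity gives `[W₀, W₂] = [W₋₁, W₁]`, and writing `G₂` through `[W₁, W₋₁]_{q²}` and `[G̃₁, G₁]_q`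
gives `[W₀, G₂] = [W₋₁, G₁]`. Hence
`[W₀, [W₀, G₂]_q] = [W₀, [W₋₁, G₁]]_q = [W₋₁, [W₀, G₁]_q] = ρ[W₋₁, W₋₁ - W₁] = -ρ[W₀, W₂]`,
which is `[W₀, W₋₂] = 0`. Reversing words while exchanging `A` and `A*` fixes `G₁` and `G₂` and
takes `W₋₂` to `W₃`, so the second commutation is the first one in the opposite algebra.
-/

namespace QOnsager

open MulOpposite

attribute [local instance] LieRing.ofAssociativeRing

variable {𝕜 R : Type*} [Field 𝕜] [Ring R] [Algebra 𝕜 R]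

/-- The q-commutator `[X, Y]_q = q XY - q⁻¹ YX` over an arbitrary field. -/
def qBracket (q : 𝕜) (X Y : R) : R :=
  q • (X * Y) - q⁻¹ • (Y * X)

section qBracket

variable (q c : 𝕜) (X Y Z : R)

theorem qBracket_sub_left : qBracket q (X - Y) Z = qBracket q X Z - qBracket q Y Z := by
  simp only [qBracket, sub_mul, mul_sub]
  module

theorem qBracket_sub_right : qBracket q X (Y - Z) = qBracket q X Y - qBracket q X Z := by
  simp only [qBracket, sub_mul, mul_sub]
  module

theorem qBracket_smul_left : qBracket q (c • X) Y = c • qBracket q X Y := by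
  simp only [qBracket, smul_mul_assoc, mul_smul_comm]
  module

theorem qBracket_smul_right : qBracket q X (c • Y) = c • qBracket q X Y := by
  simp only [qBracket, smul_mul_assoc, mul_smul_comm]
  module

theorem qBracket_inv : qBracket q⁻¹ X Y = -qBracket q Y X := by
  simp only [qBracket, inv_inv, neg_sub]

theorem qBracket_add_smul_one :
    qBracket q X (Y + c • (1 : R)) = qBracket q X Y + (c * (q - q⁻¹)) • X := by
  simp only [qBracket, mul_add, add_mul, mul_smul_comm, smul_mul_assoc, mul_one, one_mul]
  module

theorem add_smul_one_qBracket :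
    qBracket q (X + c • (1 : R)) Y = qBracket q X Y + (c * (q - q⁻¹)) • Y := by
  simp only [qBracket, mul_add, add_mul, mul_smul_comm, smul_mul_assoc, mul_one, one_mul]
  module

theorem lie_op : ⁅op X, op Y⁆ = op ⁅Y, X⁆ := rfl

theorem qBracket_op : qBracket q (op X) (op Y) = op (qBracket q Y X) := rfl

theorem qBracket_sub_qBracket_swap :
    qBracket q X Y - qBracket q Y X = (q + q⁻¹) • ⁅X, Y⁆ := by
  simp only [qBracket, Ring.lie_def]
  module

theorem qBracket_sq_sub_qBracket_sq_swap :
    qBracket (q ^ 2) X Y - qBracket (q ^ 2) Y X = (q ^ 2 + q⁻¹ ^ 2) • ⁅X, Y⁆ := by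
  rw [qBracket_sub_qBracket_swap, inv_pow]

theorem lie_qBracket : ⁅X, qBracket q Y Z⁆ = qBracket q ⁅X, Y⁆ Z + qBracket q Y ⁅X, Z⁆ := by
  simp only [qBracket, Ring.lie_def, mul_sub, sub_mul, smul_mul_assoc, mul_smul_comm, mul_assoc]
  module

theorem lie_qBracket_jacobi :
    ⁅X, qBracket q Y Z⁆ = ⁅qBracket q X Y, Z⁆ + ⁅qBracket q Z X, Y⁆ := by
  simp only [qBracket, Ring.lie_def, mul_sub, sub_mul, smul_mul_assoc, mul_smul_comm, mul_assoc]
  module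

variable {q X Y}

theorem lie_qBracket_of_commute_left (h : Commute X Y) :
    ⁅X, qBracket q Y Z⁆ = qBracket q Y ⁅X, Z⁆ := by
  rw [lie_qBracket, h.lie_eq, add_eq_right, qBracket, zero_mul, mul_zero, smul_zero, smul_zero,
    sub_zero]

theorem lie_qBracket_of_commute_right (h : Commute X Y) :
    ⁅X, qBracket q Z Y⁆ = qBracket q ⁅X, Z⁆ Y := by
  rw [lie_qBracket, h.lie_eq, add_eq_left, qBracket, zero_mul, mul_zero, smul_zero, smul_zero,
    sub_zero]

variable (X Y)

theorem qBracket_qBracket_self (hq : q ≠ 0) :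
    qBracket q (qBracket q X Y) X = qBracket q X (qBracket q Y X) := by
  simp only [qBracket, mul_sub, sub_mul, smul_mul_assoc, mul_smul_comm, mul_assoc]
  match_scalars <;> field_simp

/-- Moving `X` past `Y` and past `Z` scales by `q²` and `q⁻²` respectively, up to the two
q-commutators on the right. -/
theorem lie_qBracket_eq_qBracket_sq (hq : q ≠ 0) :
    ⁅X, qBracket q Y Z⁆ =
      qBracket (q ^ 2) Y (qBracket q X Z) - qBracket (q ^ 2) (qBracket q Y X) Z := by
  simp only [qBracket, Ring.lie_def, mul_sub, sub_mul, smul_mul_assoc, mul_smul_comm, mul_assoc]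
  match_scalars <;> field_simp <;> ring

end qBracket

/-- The q-Dolan–Grady relation `[A, [A, [A, B]_q]_{q⁻¹}] = ρ [A, B]`. The q-Onsager relations are
this one together with its image under `A ↔ B`. -/
def IsDolanGrady (q ρ : 𝕜) (A B : R) : Prop :=
  ⁅A, qBracket q⁻¹ A (qBracket q A B)⁆ = ρ • ⁅A, B⁆

/-- The generator `G₁`, with `W₀ = A` and `W₁ = B`; the generator `G̃₁` is `gOne q a₁ B A`. -/
def gOne (q a₁ : 𝕜) (A B : R) : R :=
  qBracket q B A + a₁ • (1 : R)

/-- The generator `W₋₁`, in the recursive form `W₁ + ρ⁻¹ [W₀, G₁]_q`. -/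
def wNegOne (q ρ a₁ : 𝕜) (A B : R) : R :=
  B + ρ⁻¹ • qBracket q A (gOne q a₁ A B)

/-- The generator `W₂`, in the recursive form `W₀ + ρ⁻¹ [G₁, W₁]_q`. -/
def wTwo (q ρ a₁ : 𝕜) (A B : R) : R :=
  A + ρ⁻¹ • qBracket q (gOne q a₁ A B) B

/-- The generator `G₂`, as a polynomial in `A` and `B`; the scalar `a₂` is its constant term. -/
def gTwo (q ρ a₁ a₂ : 𝕜) (A B : R) : R :=
  (ρ * (q ^ 2 + q⁻¹ ^ 2))⁻¹ •
    ((q⁻¹ ^ 3 + q⁻¹) • (A ^ 2 * B ^ 2) - (q ^ 3 + q) • (B ^ 2 * A ^ 2)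
      + (q⁻¹ ^ 3 - q ^ 3) • (A * B ^ 2 * A + B * A ^ 2 * B)
      - (q⁻¹ ^ 5 + q⁻¹ ^ 3 + 2 * q⁻¹) • (A * B * A * B)
      + (q ^ 5 + q ^ 3 + 2 * q) • (B * A * B * A)
      + (ρ * (q - q⁻¹)) • (A ^ 2 + B ^ 2)
      + (a₁ * (q ^ 2 + q⁻¹ ^ 2) * (q - q⁻¹)) • qBracket q B A) + a₂ • (1 : R)

/-- The generator `W₋₂ = W₂ + ρ⁻¹ [W₀, G₂]_q`. -/
def wNegTwo (q ρ a₁ a₂ : 𝕜) (A B : R) : R :=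
  wTwo q ρ a₁ A B + ρ⁻¹ • qBracket q A (gTwo q ρ a₁ a₂ A B)

/-- The generator `W₃ = W₋₁ + ρ⁻¹ [G₂, W₁]_q`. -/
def wThree (q ρ a₁ a₂ : 𝕜) (A B : R) : R :=
  wNegOne q ρ a₁ A B + ρ⁻¹ • qBracket q (gTwo q ρ a₁ a₂ A B) B

variable {q ρ : 𝕜} (a₁ a₂ : 𝕜) (A B : R)

theorem wNegOne_eq (hq : q ≠ 0) :
    wNegOne q ρ a₁ A B =
      ρ⁻¹ • ((q ^ 2 + q⁻¹ ^ 2) • (A * B * A) - A ^ 2 * B - B * A ^ 2) + B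
        + (ρ⁻¹ * a₁ * (q - q⁻¹)) • A := by
  simp only [wNegOne, gOne, qBracket, pow_two A, mul_sub, sub_mul, mul_add, add_mul,
    smul_mul_assoc, mul_smul_comm, mul_assoc, mul_one, one_mul]
  match_scalars <;> field_simp
  ring

theorem wTwo_eq (hq : q ≠ 0) :
    wTwo q ρ a₁ A B =
      ρ⁻¹ • ((q ^ 2 + q⁻¹ ^ 2) • (B * A * B) - B ^ 2 * A - A * B ^ 2) + A
        + (ρ⁻¹ * a₁ * (q - q⁻¹)) • B := by
  simp only [wTwo, gOne, qBracket, pow_two B, mul_sub, sub_mul, mul_add, add_mul,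
    smul_mul_assoc, mul_smul_comm, mul_assoc, mul_one, one_mul]
  match_scalars <;> field_simp
  ring

theorem gOne_swap_sub_gOne : gOne q a₁ B A - gOne q a₁ A B = (q + q⁻¹) • ⁅A, B⁆ := by
  rw [gOne, gOne, add_sub_add_right_eq_sub, qBracket_sub_qBracket_swap]

theorem qBracket_gOne (hρ : ρ ≠ 0) :
    qBracket q A (gOne q a₁ A B) = ρ • (wNegOne q ρ a₁ A B - B) := by
  rw [wNegOne, add_sub_cancel_left, smul_inv_smul₀ hρ]

theorem qBracket_gOne_swap (hq : q ≠ 0) (hρ : ρ ≠ 0) :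
    qBracket q (gOne q a₁ B A) A = ρ • (wNegOne q ρ a₁ A B - B) := by
  rw [← qBracket_gOne a₁ A B hρ, gOne, gOne, add_smul_one_qBracket, qBracket_add_smul_one,
    qBracket_qBracket_self A B hq]

theorem lie_qBracket_gOne_swap_gOne (hq : q ≠ 0) (hρ : ρ ≠ 0) :
    ⁅A, qBracket q (gOne q a₁ B A) (gOne q a₁ A B)⁆ =
      ρ • (qBracket (q ^ 2) (gOne q a₁ B A) (wNegOne q ρ a₁ A B - B)
        - qBracket (q ^ 2) (wNegOne q ρ a₁ A B - B) (gOne q a₁ A B)) := by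
  rw [lie_qBracket_eq_qBracket_sq _ _ _ hq, qBracket_gOne a₁ A B hρ,
    qBracket_gOne_swap a₁ A B hq hρ, qBracket_smul_left, qBracket_smul_right, smul_sub]

theorem qBracket_sq_gOne_swap_sub_qBracket_sq_gOne (hq : q ≠ 0) :
    qBracket (q ^ 2) (gOne q a₁ B A) B - qBracket (q ^ 2) B (gOne q a₁ A B) =
      (q ^ 3 - q⁻¹ ^ 3) • ⁅A, B ^ 2⁆ := by
  simp only [gOne, qBracket, Ring.lie_def, pow_two B, mul_sub, sub_mul, mul_add, add_mul,
    smul_mul_assoc, mul_smul_comm, mul_assoc, mul_one, one_mul]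
  match_scalars <;> field_simp <;> ring

variable {A B}

theorem IsDolanGrady.commute_wNegOne (hq : q ≠ 0) (hρ : ρ ≠ 0) (h : IsDolanGrady q ρ A B) :
    Commute A (wNegOne q ρ a₁ A B) := by
  have lie_qBracket_qBracket : ⁅A, qBracket q A (qBracket q B A)⁆ = -(ρ • ⁅A, B⁆) := by
    rw [← h, qBracket_inv, qBracket_qBracket_self A B hq, lie_neg, neg_neg]
  rw [commute_iff_lie_eq, wNegOne, gOne, qBracket_add_smul_one, lie_add,
    LieAlgebra.lie_smul, lie_add, LieAlgebra.lie_smul, lie_self, smul_zero, add_zero,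
    lie_qBracket_qBracket, smul_neg, inv_smul_smul₀ hρ, add_neg_cancel]

theorem IsDolanGrady.op (hq : q ≠ 0) (h : IsDolanGrady q ρ A B) :
    IsDolanGrady q ρ (op A) (op B) := by
  have qBracket_reverse : qBracket q⁻¹ (qBracket q B A) A = qBracket q⁻¹ A (qBracket q A B) := by
    rw [qBracket_inv, qBracket_inv, qBracket_qBracket_self A B hq]
  rw [IsDolanGrady, qBracket_op, qBracket_op, lie_op, lie_op, qBracket_reverse, ← lie_skew, h,
    ← lie_skew B A, op_neg, op_neg, op_smul, smul_neg]

variable (A B)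

theorem lie_wTwo : ⁅A, wTwo q ρ a₁ A B⁆ = ⁅wNegOne q ρ a₁ A B, B⁆ := by
  have lie_gOne : ⁅qBracket q B A, gOne q a₁ A B⁆ = 0 := by
    rw [gOne, lie_add, lie_self, LieAlgebra.lie_smul, (Commute.one_right _).lie_eq,
      smul_zero, add_zero]
  rw [wTwo, wNegOne, lie_add, add_lie, lie_self, lie_self, LieAlgebra.lie_smul, smul_lie ρ⁻¹,
    lie_qBracket_jacobi, lie_gOne, add_zero]

theorem smul_gTwo (hq : q ≠ 0) (hρ : ρ ≠ 0) (hS : q ^ 2 + q⁻¹ ^ 2 ≠ 0) :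
    (ρ * (q ^ 2 + q⁻¹ ^ 2)) • gTwo q ρ a₁ a₂ A B =
      (ρ * (q + q⁻¹)) • qBracket (q ^ 2) B (wNegOne q ρ a₁ A B)
        - qBracket q (gOne q a₁ B A) (gOne q a₁ A B)
        + (ρ * (q - q⁻¹)) • A ^ 2 - (ρ * (q ^ 3 - q⁻¹ ^ 3)) • B ^ 2
        + (ρ * (q ^ 2 + q⁻¹ ^ 2) * a₂ + a₁ ^ 2 * (q - q⁻¹)) • (1 : R) := by
  rw [gTwo, smul_add, smul_inv_smul₀ (mul_ne_zero hρ hS)]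
  simp only [wNegOne, gOne, qBracket, pow_two A, pow_two B, mul_sub, sub_mul, mul_add, add_mul,
    smul_mul_assoc, mul_smul_comm, mul_assoc, mul_one, one_mul]
  match_scalars <;> field_simp <;> ring

theorem lie_smul_gTwo (hq : q ≠ 0) (hρ : ρ ≠ 0) (hS : q ^ 2 + q⁻¹ ^ 2 ≠ 0) :
    (ρ * (q ^ 2 + q⁻¹ ^ 2)) • ⁅A, gTwo q ρ a₁ a₂ A B⁆ =
      ρ • (q + q⁻¹) • ⁅A, qBracket (q ^ 2) B (wNegOne q ρ a₁ A B)⁆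
        - ⁅A, qBracket q (gOne q a₁ B A) (gOne q a₁ A B)⁆
        - ρ • (q ^ 3 - q⁻¹ ^ 3) • ⁅A, B ^ 2⁆ := by
  have lie_sq : ⁅A, A ^ 2⁆ = 0 := ((Commute.refl A).pow_right 2).lie_eq
  have lie_one : ⁅A, (1 : R)⁆ = 0 := (Commute.one_right A).lie_eq
  rw [← LieAlgebra.lie_smul, smul_gTwo a₁ a₂ A B hq hρ hS]
  simp only [lie_add, lie_sub, LieAlgebra.lie_smul, lie_sq, lie_one, smul_zero, add_zero, mul_smul]

variable {A B}

theorem IsDolanGrady.lie_qBracket_wNegOne (hq : q ≠ 0) (hρ : ρ ≠ 0)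
    (h : IsDolanGrady q ρ A B) (p : 𝕜) :
    (q + q⁻¹) • ⁅A, qBracket p B (wNegOne q ρ a₁ A B)⁆ =
      qBracket p (gOne q a₁ B A) (wNegOne q ρ a₁ A B)
        - qBracket p (gOne q a₁ A B) (wNegOne q ρ a₁ A B) := by
  rw [lie_qBracket_of_commute_right _ (h.commute_wNegOne a₁ hq hρ), ← qBracket_smul_left,
    ← gOne_swap_sub_gOne a₁ A B, qBracket_sub_left]

theorem IsDolanGrady.lie_gTwo (hq : q ≠ 0) (hρ : ρ ≠ 0) (hS : q ^ 2 + q⁻¹ ^ 2 ≠ 0)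
    (h : IsDolanGrady q ρ A B) :
    ⁅A, gTwo q ρ a₁ a₂ A B⁆ = ⁅wNegOne q ρ a₁ A B, gOne q a₁ A B⁆ := by
  set W := wNegOne q ρ a₁ A B
  set G := gOne q a₁ A B
  set G' := gOne q a₁ B A
  have lie_W : (q + q⁻¹) • ⁅A, qBracket (q ^ 2) B W⁆ =
      qBracket (q ^ 2) G' W - qBracket (q ^ 2) G W := h.lie_qBracket_wNegOne a₁ hq hρ (q ^ 2)
  have lie_G : ⁅A, qBracket q G' G⁆ =
      ρ • (qBracket (q ^ 2) G' (W - B) - qBracket (q ^ 2) (W - B) G) :=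
    lie_qBracket_gOne_swap_gOne a₁ A B hq hρ
  have lie_B : qBracket (q ^ 2) G' B - qBracket (q ^ 2) B G = (q ^ 3 - q⁻¹ ^ 3) • ⁅A, B ^ 2⁆ :=
    qBracket_sq_gOne_swap_sub_qBracket_sq_gOne a₁ A B hq
  refine smul_right_injective R (mul_ne_zero hρ hS) ?_
  calc (ρ * (q ^ 2 + q⁻¹ ^ 2)) • ⁅A, gTwo q ρ a₁ a₂ A B⁆
      = ρ • (q + q⁻¹) • ⁅A, qBracket (q ^ 2) B W⁆ - ⁅A, qBracket q G' G⁆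
          - ρ • (q ^ 3 - q⁻¹ ^ 3) • ⁅A, B ^ 2⁆ := lie_smul_gTwo a₁ a₂ A B hq hρ hS
    _ = ρ • (qBracket (q ^ 2) W G - qBracket (q ^ 2) G W) := by
        rw [lie_W, lie_G, ← lie_B, qBracket_sub_left, qBracket_sub_right]
        module
    _ = (ρ * (q ^ 2 + q⁻¹ ^ 2)) • ⁅W, G⁆ := by
        rw [qBracket_sq_sub_qBracket_sq_swap, mul_smul]

theorem IsDolanGrady.commute_wNegTwo (hq : q ≠ 0) (hρ : ρ ≠ 0) (hS : q ^ 2 + q⁻¹ ^ 2 ≠ 0)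
    (h : IsDolanGrady q ρ A B) : Commute (wNegTwo q ρ a₁ a₂ A B) A := by
  set W := wNegOne q ρ a₁ A B
  set G := gOne q a₁ A B
  have hAW : Commute A W := h.commute_wNegOne a₁ hq hρ
  have lie_qBracket_gTwo : ⁅A, qBracket q A (gTwo q ρ a₁ a₂ A B)⁆ = -ρ • ⁅W, B⁆ :=
    calc ⁅A, qBracket q A (gTwo q ρ a₁ a₂ A B)⁆
        = qBracket q A ⁅A, gTwo q ρ a₁ a₂ A B⁆ := lie_qBracket_of_commute_left _ (Commute.refl A)
      _ = qBracket q A ⁅W, G⁆ := by rw [h.lie_gTwo a₁ a₂ hq hρ hS]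
      _ = ⁅W, qBracket q A G⁆ := (lie_qBracket_of_commute_left _ hAW.symm).symm
      _ = ⁅W, ρ • (W - B)⁆ := by rw [qBracket_gOne a₁ A B hρ]
      _ = -ρ • ⁅W, B⁆ := by
          rw [LieAlgebra.lie_smul, lie_sub, lie_self, zero_sub, smul_neg, neg_smul]
  refine (commute_iff_lie_eq.mpr ?_).symm
  rw [wNegTwo, lie_add, lie_wTwo, LieAlgebra.lie_smul, lie_qBracket_gTwo, neg_smul, smul_neg,
    inv_smul_smul₀ hρ, add_neg_cancel]

section Opposite

variable (q ρ A B)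

theorem wTwo_op : wTwo q ρ a₁ (op B) (op A) = op (wNegOne q ρ a₁ A B) := rfl

theorem gTwo_op : gTwo q ρ a₁ a₂ (op B) (op A) = op (gTwo q ρ a₁ a₂ A B) := by
  simp only [gTwo, qBracket, op_add, op_sub, op_smul, op_mul, op_pow, op_one, mul_assoc]
  module

theorem wNegTwo_op : wNegTwo q ρ a₁ a₂ (op B) (op A) = op (wThree q ρ a₁ a₂ A B) := by
  rw [wNegTwo, wThree, wTwo_op, gTwo_op, qBracket_op, op_add, op_smul]

end Opposite

theorem IsDolanGrady.commute_wThree (hq : q ≠ 0) (hρ : ρ ≠ 0) (hS : q ^ 2 + q⁻¹ ^ 2 ≠ 0)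
    (h : IsDolanGrady q ρ B A) : Commute (wThree q ρ a₁ a₂ A B) B := by
  have := (h.op hq).commute_wNegTwo a₁ a₂ hq hρ hS
  rwa [wNegTwo_op, commute_op] at this

theorem sq_add_inv_sq_ne_zero (hq : q ≠ 0) (hq8 : q ^ 8 ≠ 1) : q ^ 2 + q⁻¹ ^ 2 ≠ 0 := by
  intro h
  have h4 : q ^ 4 = -1 := by
    field_simp at h
    linear_combination h
  exact hq8 (by linear_combination (q ^ 4 - 1) * h4)

end QOnsager

open QOnsager in
theorem stmt_7_general {𝕜 R : Type*} [Field 𝕜] [Ring R] [Algebra 𝕜 R] {q ρ : 𝕜} (a₁ a₂ : 𝕜)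
    (hq : q ≠ 0) (hS : q ^ 2 + q⁻¹ ^ 2 ≠ 0) (hρ : ρ ≠ 0) {A B : R}
    (hA : IsDolanGrady q ρ A B) (hB : IsDolanGrady q ρ B A) :
    Commute (wNegTwo q ρ a₁ a₂ A B) A ∧ Commute (wThree q ρ a₁ a₂ A B) B :=
  ⟨hA.commute_wNegTwo a₁ a₂ hq hρ hS, hB.commute_wThree a₁ a₂ hq hρ hS⟩

theorem stmt_7
    {R : Type*} [Ring R] [Algebra ℂ R]
    (q ρ a₁ : ℂ) (hq : q ≠ 0) (hq8 : q ^ 8 ≠ 1) (hρ : ρ ≠ 0)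
    (A As : R)
    (hDG1 : lieComm A (qcomm q⁻¹ A (qcomm q A As)) = ρ • lieComm A As)
    (hDG2 : lieComm As (qcomm q⁻¹ As (qcomm q As A)) = ρ • lieComm As A)
    (G1 Gt1 Wm1 W2 : R)
    (hG1 : G1 = qcomm q As A + a₁ • (1 : R))
    (hGt1 : Gt1 = qcomm q A As + a₁ • (1 : R))
    (hWm1 : Wm1 = ρ⁻¹ • ((q ^ 2 + q⁻¹ ^ 2) • (A * As * A) - A ^ 2 * As - As * A ^ 2)
        + As + (ρ⁻¹ * a₁ * (q - q⁻¹)) • A)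
    (hW2 : W2 = ρ⁻¹ • ((q ^ 2 + q⁻¹ ^ 2) • (As * A * As) - As ^ 2 * A - A * As ^ 2)
        + A + (ρ⁻¹ * a₁ * (q - q⁻¹)) • As)
    (a₂ : ℂ) (G2 Gt2 : R)
    (hG2 : G2 = (ρ * (q ^ 2 + q⁻¹ ^ 2))⁻¹ •
        ((q⁻¹ ^ 3 + q⁻¹) • (A ^ 2 * As ^ 2) - (q ^ 3 + q) • (As ^ 2 * A ^ 2)
          + (q⁻¹ ^ 3 - q ^ 3) • (A * As ^ 2 * A + As * A ^ 2 * As)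
          - (q⁻¹ ^ 5 + q⁻¹ ^ 3 + 2 * q⁻¹) • (A * As * A * As)
          + (q ^ 5 + q ^ 3 + 2 * q) • (As * A * As * A)
          + (ρ * (q - q⁻¹)) • (A ^ 2 + As ^ 2)
          + (a₁ * (q ^ 2 + q⁻¹ ^ 2) * (q - q⁻¹)) • qcomm q As A) + a₂ • (1 : R))
    (hGt2 : Gt2 = (ρ * (q ^ 2 + q⁻¹ ^ 2))⁻¹ •
        ((q⁻¹ ^ 3 + q⁻¹) • (As ^ 2 * A ^ 2) - (q ^ 3 + q) • (A ^ 2 * As ^ 2)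
          + (q⁻¹ ^ 3 - q ^ 3) • (As * A ^ 2 * As + A * As ^ 2 * A)
          - (q⁻¹ ^ 5 + q⁻¹ ^ 3 + 2 * q⁻¹) • (As * A * As * A)
          + (q ^ 5 + q ^ 3 + 2 * q) • (A * As * A * As)
          + (ρ * (q - q⁻¹)) • (As ^ 2 + A ^ 2)
          + (a₁ * (q ^ 2 + q⁻¹ ^ 2) * (q - q⁻¹)) • qcomm q A As) + a₂ • (1 : R))
    (Wm2 W3 : R)
    (hWm2 : Wm2 = W2 + ρ⁻¹ • qcomm q A G2)
    (hW3 : W3 = Wm1 + ρ⁻¹ • qcomm q G2 As)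
    : lieComm Wm2 A = 0 ∧ lieComm W3 As = 0 := by
  rw [hWm2, hW3, hW2, hWm1, hG2, ← QOnsager.wTwo_eq a₁ A As hq, ← QOnsager.wNegOne_eq a₁ A As hq]
  exact (stmt_7_general a₁ a₂ hq (QOnsager.sq_add_inv_sq_ne_zero hq hq8) hρ hDG1 hDG2).imp
    sub_eq_zero.mpr sub_eq_zero.mpr
end
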